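/- Let n ≥ 1, let 0 < τ₁ ≤ τ₂ ≤ ⋯ ≤ τ_n be real numbers, and let B ≥ 1 be an integer. Define t = 2·min_{m∈[n]} (∑_{i=1}^m 1/τ_i)^{-1}(B + m). Then ∑_{i=1}^n max{⌊t/τ_i⌋ − 1, 0} ≥ B. (Interpretation: n workers, where worker i needs τ_i seconds per stochastic gradient, can jointly produce at least B new gradients within time t from any starting moment, even if each worker must first finish an in-flight computation.) -/

import Mathlib

/-!
Worker `i` delivers at least `⌊t / τ i⌋ - 1 > t / τ i - 2` new gradients: one is lost to the
computation in flight and less than one to rounding. A group of `m` workers thus loses at most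
`2 * m` out of the ideal total `t * ∑ i, (τ i)⁻¹`. At `t = 2 * (∑ i, (τ i)⁻¹)⁻¹ * (B + m)` the ideal
total is `2 * B + 2 * m`, so the group still delivers `2 * B`. A group attaining the
minimum therefore suffices, since the other workers only add to the total.
-/

section FloorSubOne

variable {ι R : Type*} [Ring R] [LinearOrder R] [IsStrictOrderedRing R] [FloorRing R]

theorem sub_two_le_max_floor_sub_one (x : R) : x - 2 ≤ (max (⌊x⌋ - 1) 0 : ℤ) :=
  calc
    x - 2 = x - 1 - 1 := by rw [sub_sub, one_add_one_eq_two]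
    _ ≤ ⌊x⌋ - 1 := sub_le_sub_right (Int.sub_one_lt_floor x).le 1
    _ = (⌊x⌋ - 1 : ℤ) := by rw [Int.cast_sub, Int.cast_one]
    _ ≤ (max (⌊x⌋ - 1) 0 : ℤ) := Int.cast_mono (le_max_left _ _)

theorem sum_sub_two_mul_card_le_sum_max_floor_sub_one (s : Finset ι) (x : ι → R) :
    ∑ i ∈ s, x i - 2 * s.card ≤ (∑ i ∈ s, max (⌊x i⌋ - 1) 0 : ℤ) :=
  calc
    ∑ i ∈ s, x i - 2 * s.card = ∑ i ∈ s, (x i - 2) := by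
      rw [Finset.sum_sub_distrib, Finset.sum_const, nsmul_eq_mul']
    _ ≤ ∑ i ∈ s, ((max (⌊x i⌋ - 1) 0 : ℤ) : R) :=
      Finset.sum_le_sum fun i _ => sub_two_le_max_floor_sub_one (x i)
    _ = (∑ i ∈ s, max (⌊x i⌋ - 1) 0 : ℤ) := (Int.cast_sum _ _).symm

end FloorSubOne

theorem le_sum_div_of_inv_sum_inv_mul_le {ι K : Type*} [Semifield K] [LinearOrder K]
    [IsStrictOrderedRing K] {s : Finset ι} {τ : ι → K} {a t : K}
    (hrate : 0 < ∑ i ∈ s, (τ i)⁻¹) (ht : (∑ i ∈ s, (τ i)⁻¹)⁻¹ * a ≤ t) :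
    a ≤ ∑ i ∈ s, t / τ i := by
  simpa only [div_eq_mul_inv, Finset.sum_mul, mul_comm t] using (inv_mul_le_iff₀ hrate).mp ht

theorem le_sum_max_floor_div_sub_one {ι K : Type*} [Field K] [LinearOrder K]
    [IsStrictOrderedRing K] [FloorRing K] {s u : Finset ι} (hus : u ⊆ s) {τ : ι → K} {b t : K}
    (hrate : 0 < ∑ i ∈ u, (τ i)⁻¹) (ht : (∑ i ∈ u, (τ i)⁻¹)⁻¹ * (b + 2 * u.card) ≤ t) :
    b ≤ (∑ i ∈ s, max (⌊t / τ i⌋ - 1) 0 : ℤ) :=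
  calc
    b ≤ ∑ i ∈ u, t / τ i - 2 * u.card :=
      le_sub_iff_add_le.mpr (le_sum_div_of_inv_sum_inv_mul_le hrate ht)
    _ ≤ (∑ i ∈ u, max (⌊t / τ i⌋ - 1) 0 : ℤ) := sum_sub_two_mul_card_le_sum_max_floor_sub_one _ _
    _ ≤ (∑ i ∈ s, max (⌊t / τ i⌋ - 1) 0 : ℤ) :=
      Int.cast_mono <| Finset.sum_le_sum_of_subset_of_nonneg hus fun _ _ _ => le_max_right _ _

theorem time_to_collect_batch_general {n : ℕ} (hn : 1 ≤ n) {τ : ℕ → ℝ}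
    (hpos : ∀ i, i < n → 0 < τ i) {B t : ℝ}
    (ht : 2 * (Finset.range n).inf' (Finset.nonempty_range_iff.mpr (by omega))
        (fun m => (∑ i ∈ Finset.range (m + 1), (τ i)⁻¹)⁻¹ * (B + (m + 1))) ≤ t) :
    2 * B ≤ (∑ i ∈ Finset.range n, max (⌊t / τ i⌋ - 1) 0 : ℤ) := by
  obtain ⟨m, hm, hmt⟩ := (Finset.inf'_le_iff _).mp ((le_div_iff₀' two_pos).mpr ht)
  have hsub : Finset.range (m + 1) ⊆ Finset.range n :=
    Finset.range_subset_range.mpr (Finset.mem_range.mp hm)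
  have hrate : 0 < ∑ i ∈ Finset.range (m + 1), (τ i)⁻¹ :=
    Finset.sum_pos (fun i hi => inv_pos.mpr (hpos i (Finset.mem_range.mp (hsub hi))))
      Finset.nonempty_range_add_one
  refine le_sum_max_floor_div_sub_one hsub hrate ?_
  rw [Finset.card_range]
  push_cast
  linarith

/-- With `n` workers of speeds `0 < τ₁ ≤ ⋯ ≤ τ_n` (indexed here by
`i ∈ {0, …, n−1}`, so that worker `i` corresponds to the paper's worker `i+1`) and
`t = 2·min_{m∈[n]} (∑_{i=1}^m 1/τ_i)⁻¹ (B + m)`, the workers can jointly produce at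
least `B` new gradients within `t` seconds: `∑_{i=1}^n max{⌊t/τ_i⌋ − 1, 0} ≥ B`. -/
theorem time_to_collect_batch
    (n : ℕ) (hn : 1 ≤ n) (τ : ℕ → ℝ)
    (hpos : ∀ i, i < n → 0 < τ i)
    (hmono : ∀ i j, i ≤ j → j < n → τ i ≤ τ j)
    (B : ℕ) (hB : 1 ≤ B)
    (t : ℝ)
    (ht : t = 2 * (Finset.range n).inf' (Finset.nonempty_range_iff.mpr (by omega))
        (fun m => (∑ i ∈ Finset.range (m + 1), (τ i)⁻¹)⁻¹ * ((B : ℝ) + (m + 1)))) :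
    (B : ℤ) ≤ ∑ i ∈ Finset.range n, max (⌊t / τ i⌋ - 1) 0 := by
  have htwice := time_to_collect_batch_general hn hpos ht.ge
  exact_mod_cast (le_mul_of_one_le_left B.cast_nonneg one_le_two).trans htwice
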